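/- Let M be a horizontally linked R-module of finite G-dimension. Then Gdim_R(M) = 0 if and only if depth_{R_p}(M_p) + depth_{R_p}((λM)_p) > depth R_p for every prime p ∈ Spec R with depth R_p > 0. -/

import Mathlib

open CategoryTheory

noncomputable section

universe u

/-- The `i`-th Ext group `Ext^i_R(M,N)`, as a type (with its `R`-module structure). -/
abbrev extM (R : Type u) [CommRing R] (i : ℕ) (M N : Type u) [AddCommGroup M] [Module R M]
    [AddCommGroup N] [Module R N] : Type u :=
  ((Ext R (ModuleCat.{u} R) i).obj (Opposite.op (ModuleCat.of R M))).obj (ModuleCat.of R N)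

/-- The `i`-th Tor group `Tor^R_i(M,N)`, as a type. -/
abbrev torM (R : Type u) [CommRing R] (i : ℕ) (M N : Type u) [AddCommGroup M] [Module R M]
    [AddCommGroup N] [Module R N] : Type u :=
  ((Tor (ModuleCat.{u} R) i).obj (ModuleCat.of R M)).obj (ModuleCat.of R N)

/-- The `i`-th local cohomology `H^i_I(M)`, as a type. -/
abbrev locCoh (R : Type u) [CommRing R] (I : Ideal R) (i : ℕ) (M : Type u) [AddCommGroup M]
    [Module R M] : Type u :=
  (localCohomology I i).obj (ModuleCat.of R M)

/-- A submodule `N ≤ M` is superfluous if `K ⊔ N = ⊤` implies `K = ⊤`. -/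
def Submodule.IsSuperfluous {R M : Type u} [CommRing R] [AddCommGroup M] [Module R M]
    (N : Submodule R M) : Prop :=
  ∀ K : Submodule R M, K ⊔ N = ⊤ → K = ⊤

/-- A minimal projective resolution of `M` by finitely generated projective modules:
each `P i → Ω^i M` is a projective cover (i.e. has superfluous kernel). -/
structure MinRes (R : Type u) [CommRing R] (M : Type u) [AddCommGroup M] [Module R M] where
  P : ℕ → ModuleCat.{u} R
  projective : ∀ i, Module.Projective R (P i)
  finite : ∀ i, Module.Finite R (P i)
  d : (i : ℕ) → (↥(P (i + 1)) →ₗ[R] ↥(P i))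
  ε : ↥(P 0) →ₗ[R] M
  surj : Function.Surjective ε
  exact0 : LinearMap.range (d 0) = LinearMap.ker ε
  exact : ∀ i, LinearMap.range (d (i + 1)) = LinearMap.ker (d i)
  min_eps : (LinearMap.ker ε).IsSuperfluous
  min_d : ∀ i, (LinearMap.ker (d i)).IsSuperfluous

namespace MinRes

variable {R M : Type u} [CommRing R] [AddCommGroup M] [Module R M]

/-- `T k F` is the Auslander-Bridger transpose `𝒯_{k+1} M = Tr Ω^k M`, computed as the
cokernel of `P_k* → P_{k+1}*`. -/
def T (F : MinRes R M) (k : ℕ) : Type u :=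
  (Module.Dual R ↥(F.P (k + 1))) ⧸ LinearMap.range (F.d k).dualMap

instance (F : MinRes R M) (k : ℕ) : AddCommGroup (F.T k) :=
  inferInstanceAs (AddCommGroup ((Module.Dual R ↥(F.P (k + 1))) ⧸
    LinearMap.range (F.d k).dualMap))

instance (F : MinRes R M) (k : ℕ) : Module R (F.T k) :=
  inferInstanceAs (Module R ((Module.Dual R ↥(F.P (k + 1))) ⧸
    LinearMap.range (F.d k).dualMap))

/-- The transpose `Tr M = coker(P₀* → P₁*)` computed from a minimal projective presentation. -/
abbrev Tr (F : MinRes R M) : Type u := F.T 0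

/-- `λM = ΩTr M`, realized as the image of `P₀* → P₁*` for a minimal projective
presentation `P₁ → P₀ → M → 0`. -/
def lambdaMod (F : MinRes R M) : Type u :=
  ↥(LinearMap.range (F.d 0).dualMap)

instance (F : MinRes R M) : AddCommGroup F.lambdaMod :=
  inferInstanceAs (AddCommGroup ↥(LinearMap.range (F.d 0).dualMap))

instance (F : MinRes R M) : Module R F.lambdaMod :=
  inferInstanceAs (Module R ↥(LinearMap.range (F.d 0).dualMap))

end MinRes

/-- `M` is a horizontally linked `R`-module, i.e. `M ≅ λλM`. -/
def IsHorizontallyLinked (R : Type u) [CommRing R] (M : Type u) [AddCommGroup M]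
    [Module R M] : Prop :=
  ∃ (F : MinRes R M) (G : MinRes R F.lambdaMod), Nonempty (G.lambdaMod ≃ₗ[R] M)

/-- `M` and `N` are horizontally linked to each other: `M ≅ λN` and `N ≅ λM`. -/
def MutuallyLinked (A : Type u) [CommRing A] (M N : Type u) [AddCommGroup M] [Module A M]
    [AddCommGroup N] [Module A N] : Prop :=
  ∃ (F : MinRes A M) (G : MinRes A N),
    Nonempty (F.lambdaMod ≃ₗ[A] N) ∧ Nonempty (G.lambdaMod ≃ₗ[A] M)

/-- `M` is linked to `N` by the ideal `c`: `c` annihilates both modules and they are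
horizontally linked to each other as `R ⧸ c`-modules. -/
def LinkedBy (R : Type u) [CommRing R] (c : Ideal R) (M N : Type u) [AddCommGroup M]
    [Module R M] [AddCommGroup N] [Module R N] : Prop :=
  ∃ (hM : Module.IsTorsionBySet R M c) (hN : Module.IsTorsionBySet R N c),
    letI := hM.module
    letI := hN.module
    MutuallyLinked (R ⧸ c) M N

/-- A stable module: no nonzero projective direct summand. -/
def IsStableModule (R : Type u) [CommRing R] (M : Type u) [AddCommGroup M] [Module R M] : Prop :=
  ∀ N : Submodule R M, Module.Projective R ↥N → (∃ N' : Submodule R M, IsCompl N N') → N = ⊥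

/-- `M` has G-dimension zero: `M` is finitely generated and reflexive,
and `Ext^i(M,R) = 0 = Ext^i(M*,R)` for all `i > 0`. -/
def IsGDimZero (R : Type u) [CommRing R] (M : Type u) [AddCommGroup M] [Module R M] : Prop :=
  Module.Finite R M ∧ Function.Bijective (Module.Dual.eval R M) ∧
    (∀ i : ℕ, 0 < i → Subsingleton (extM R i M R)) ∧
    (∀ i : ℕ, 0 < i → Subsingleton (extM R i (Module.Dual R M) R))

/-- `M` admits a resolution of length `≤ n` by modules of G-dimension zero. -/
def GDimLE (R : Type u) [CommRing R] : ℕ → ModuleCat.{u} R → Prop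
  | 0, M => IsGDimZero R ↥M
  | n + 1, M =>
    ∃ (G : ModuleCat.{u} R) (f : ↥G →ₗ[R] ↥M), IsGDimZero R ↥G ∧ Function.Surjective f ∧
      GDimLE R n (ModuleCat.of R ↥(LinearMap.ker f))

/-- The G-dimension of `M`: the minimal length of a resolution of `M` by modules of
G-dimension zero (`∞` if there is none). -/
def GDim (R : Type u) [CommRing R] (M : Type u) [AddCommGroup M] [Module R M] : ℕ∞ :=
  sInf {n : ℕ∞ | ∃ k : ℕ, n = k ∧ GDimLE R k (ModuleCat.of R M)}

/-- The reduced grade of `M`: `rgr M = inf{ i > 0 | Ext^i(M,R) ≠ 0 }`. -/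
def rgr (R : Type u) [CommRing R] (M : Type u) [AddCommGroup M] [Module R M] : ℕ∞ :=
  sInf {n : ℕ∞ | ∃ k : ℕ, n = k ∧ 0 < k ∧ ¬ Subsingleton (extM R k M R)}

/-- The grade of `M`: `gr M = inf{ i ≥ 0 | Ext^i(M,R) ≠ 0 }`. -/
def egrade (R : Type u) [CommRing R] (M : Type u) [AddCommGroup M] [Module R M] : ℕ∞ :=
  sInf {n : ℕ∞ | ∃ k : ℕ, n = k ∧ ¬ Subsingleton (extM R k M R)}

/-- `depth_I(M) = inf{ i | Ext^i(R/I, M) ≠ 0 }`; for `I` the maximal ideal of a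
local ring this is the depth of `M`. -/
def edepth (R : Type u) [CommRing R] (I : Ideal R) (M : Type u) [AddCommGroup M]
    [Module R M] : ℕ∞ :=
  sInf {n : ℕ∞ | ∃ k : ℕ, n = k ∧ ¬ Subsingleton (extM R k (R ⧸ I) M)}

/-- The depth of the local ring `R`. -/
def rdepth (R : Type u) [CommRing R] [IsLocalRing R] : ℕ∞ :=
  edepth R (IsLocalRing.maximalIdeal R) R

/-- `depth_{R_p}(M_p)`. -/
def locDepth (R : Type u) [CommRing R] (p : Ideal R) [p.IsPrime] (M : Type u) [AddCommGroup M]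
    [Module R M] : ℕ∞ :=
  edepth (Localization.AtPrime p) (IsLocalRing.maximalIdeal (Localization.AtPrime p))
    (LocalizedModule p.primeCompl M)

/-- `depth R_p`. -/
def locRingDepth (R : Type u) [CommRing R] (p : Ideal R) [p.IsPrime] : ℕ∞ :=
  rdepth (Localization.AtPrime p)

/-- `Gdim_{R_p}(M_p)`. -/
def locGDim (R : Type u) [CommRing R] (p : Ideal R) [p.IsPrime] (M : Type u) [AddCommGroup M]
    [Module R M] : ℕ∞ :=
  GDim (Localization.AtPrime p) (LocalizedModule p.primeCompl M)

/-- `rgr_{R_p}(M_p)`. -/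
def locRgr (R : Type u) [CommRing R] (p : Ideal R) [p.IsPrime] (M : Type u) [AddCommGroup M]
    [Module R M] : ℕ∞ :=
  rgr (Localization.AtPrime p) (LocalizedModule p.primeCompl M)

/-- `dim_{R_p}(M_p)`, the Krull dimension of the support of `M_p` over `R_p`. -/
def locDim (R : Type u) [CommRing R] (p : Ideal R) [p.IsPrime] (M : Type u) [AddCommGroup M]
    [Module R M] : WithBot ℕ∞ :=
  ringKrullDim ((Localization.AtPrime p) ⧸
    Module.annihilator (Localization.AtPrime p) (LocalizedModule p.primeCompl M))

/-- `M` satisfies the condition `S̃_k`: `depth_{R_p}(M_p) ≥ min{k, depth R_p}` for all primes. -/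
def Stilde (R : Type u) [CommRing R] (k : ℕ) (M : Type u) [AddCommGroup M] [Module R M] : Prop :=
  ∀ (p : Ideal R) (_ : p.IsPrime), min (k : ℕ∞) (locRingDepth R p) ≤ locDepth R p M

/-- `M` satisfies Serre's condition `(S_k)`:
`depth_{R_p}(M_p) ≥ min{k, dim_{R_p}(M_p)}` for all primes. -/
def SerreS (R : Type u) [CommRing R] (k : ℕ) (M : Type u) [AddCommGroup M] [Module R M] : Prop :=
  ∀ (p : Ideal R) (_ : p.IsPrime),
    min (k : WithBot ℕ∞) (locDim R p M) ≤ (locDepth R p M : WithBot ℕ∞)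

/-- `M` is a `k`-th syzygy module. -/
def IsKthSyzygy (R : Type u) [CommRing R] : ℕ → ModuleCat.{u} R → Prop
  | 0, _ => True
  | k + 1, M =>
    ∃ (P : ModuleCat.{u} R) (f : ↥M →ₗ[R] ↥P), Module.Projective R ↥P ∧ Module.Finite R ↥P ∧
      Function.Injective f ∧ IsKthSyzygy R k (ModuleCat.of R (↥P ⧸ LinearMap.range f))

/-- The `I`-torsion submodule `Γ_I(M) = { x | I^n x = 0 for some n }`. -/
def gammaTorsion (R : Type u) [CommRing R] (I : Ideal R) (M : Type u) [AddCommGroup M]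
    [Module R M] : Submodule R M where
  carrier := {x | ∃ n : ℕ, ∀ a ∈ I ^ n, a • x = 0}
  zero_mem' := ⟨0, fun a _ => smul_zero a⟩
  add_mem' := by
    rintro x y ⟨n, hn⟩ ⟨m, hm⟩
    exact ⟨n + m, fun a ha => by
      rw [smul_add, hn a (Ideal.pow_le_pow_right (Nat.le_add_right n m) ha),
        hm a (Ideal.pow_le_pow_right (Nat.le_add_left m n) ha), add_zero]⟩
  smul_mem' := by
    rintro c x ⟨n, hn⟩
    exact ⟨n, fun a ha => by rw [smul_comm, hn a ha, smul_zero]⟩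

/-- `N` has finite flat dimension (characterized by uniform vanishing of `Tor`). -/
def HasFiniteFlatDim (R : Type u) [CommRing R] (N : Type u) [AddCommGroup N] [Module R N] : Prop :=
  ∃ n : ℕ, ∀ i : ℕ, n < i → ∀ (M : ModuleCat.{u} R), Subsingleton (torM R i ↥M N)

/-- `N` has finite injective dimension (characterized by uniform vanishing of `Ext`). -/
def HasFiniteInjDim (R : Type u) [CommRing R] (N : Type u) [AddCommGroup N] [Module R N] : Prop :=
  ∃ n : ℕ, ∀ i : ℕ, n < i → ∀ (M : ModuleCat.{u} R), Subsingleton (extM R i ↥M N)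

/-- `K` is a semidualizing `R`-module. -/
def IsSemidualizing (R : Type u) [CommRing R] (K : Type u) [AddCommGroup K] [Module R K] : Prop :=
  Module.Finite R K ∧ Function.Bijective (LinearMap.lsmul R K) ∧
    ∀ i : ℕ, 0 < i → Subsingleton (extM R i K K)

/-- The biduality map `M → Hom(Hom(M,K),K)`. -/
def evalK (R : Type u) [CommRing R] (K M : Type u) [AddCommGroup K] [Module R K]
    [AddCommGroup M] [Module R M] : M →ₗ[R] ((M →ₗ[R] K) →ₗ[R] K) :=
  LinearMap.applyₗ

/-- `M` has `G_K`-dimension zero. -/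
def IsGKDimZero (R : Type u) [CommRing R] (K M : Type u) [AddCommGroup K] [Module R K]
    [AddCommGroup M] [Module R M] : Prop :=
  Module.Finite R M ∧ Function.Bijective (evalK R K M) ∧
    (∀ i : ℕ, 0 < i → Subsingleton (extM R i M K)) ∧
    (∀ i : ℕ, 0 < i → Subsingleton (extM R i (M →ₗ[R] K) K))

/-- `M` admits a resolution of length `≤ n` by modules of `G_K`-dimension zero. -/
def GKDimLE (R : Type u) [CommRing R] (K : Type u) [AddCommGroup K] [Module R K] :
    ℕ → ModuleCat.{u} R → Prop
  | 0, M => IsGKDimZero R K ↥M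
  | n + 1, M =>
    ∃ (G : ModuleCat.{u} R) (f : ↥G →ₗ[R] ↥M), IsGKDimZero R K ↥G ∧ Function.Surjective f ∧
      GKDimLE R K n (ModuleCat.of R ↥(LinearMap.ker f))

/-- The `G_K`-dimension of `M`. -/
def GKDim (R : Type u) [CommRing R] (K M : Type u) [AddCommGroup K] [Module R K]
    [AddCommGroup M] [Module R M] : ℕ∞ :=
  sInf {n : ℕ∞ | ∃ k : ℕ, n = k ∧ GKDimLE R K k (ModuleCat.of R M)}

/-- The grade of a module, `gr_R(M) = grade(Ann_R(M), R) = inf{i | Ext^i(R/Ann M, R) ≠ 0}`. -/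
def grAnn (R : Type u) [CommRing R] (M : Type u) [AddCommGroup M] [Module R M] : ℕ∞ :=
  egrade R (R ⧸ Module.annihilator R M)

/-- The grade of an ideal, `grade(I) = inf{i | Ext^i(R/I, R) ≠ 0}`. -/
def gradeI (R : Type u) [CommRing R] (I : Ideal R) : ℕ∞ :=
  egrade R (R ⧸ I)

/-- The ideal `I` is `G_K`-Gorenstein: `R/I` is `G_K`-perfect and `Ext^{gr I}(R/I, K)` is
cyclic. -/
def IsGKGorensteinIdeal (R : Type u) [CommRing R] (K : Type u) [AddCommGroup K] [Module R K]
    (I : Ideal R) : Prop :=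
  ∃ n : ℕ, grAnn R (R ⧸ I) = (n : ℕ∞) ∧ GKDim R K (R ⧸ I) = (n : ℕ∞) ∧
    ∃ x : extM R n (R ⧸ I) K, Submodule.span R {x} = ⊤

end
section Statements

variable (R : Type u) [CommRing R] [IsNoetherianRing R]

/-!
Let `P₁ → P₀ → M → 0` be a presentation and `K = ker (P₀ → M)`, so that `λM` is the image of
`P₀* → K*`. If `M` has G-dimension zero, then `M` and `λM = K*` are `k`-th syzygies for every `k`,
so both have depth at least `depth R_p` at every prime `p`.

Conversely, if `M` has finite nonzero G-dimension, let `r` be least with `Ext^{r+1}(M, R) ≠ 0`. For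
`r = 0`, take `p` associated to `K*/λM ≅ Ext¹(M, R)`; the depth lemma gives `depth (λM)_p ≤ 1`. For
`r > 0` we have `λM = K*`, and passing from `M` to `K` lowers `r` by one and the depth of `λ` by at
most one. This yields a prime `p` with `Ext^{r+1}(M_p, R_p) ≠ 0` and `depth (λM)_p ≤ r + 1`. On the
other hand the Auslander–Bridger type inequality `depth M_p + (r + 1) ≤ depth R_p` holds whenever
`Ext^{r+1}(M_p, R_p) ≠ 0` and `M_p` has finite G-dimension, so the two depths add up to at most
`depth R_p`.
-/

section AbelianExt

open Abelian

universe v w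

variable {C : Type v} [Category.{u} C] [Abelian C] [HasExt.{w} C] {S : ShortComplex C}

theorem subsingleton_ext_left_iff_of_iso {X Y : C} (e : X ≅ Y) (W : C) (i : ℕ) :
    Subsingleton (Ext X W i) ↔ Subsingleton (Ext Y W i) :=
  (((extFunctor i).mapIso e.op).app W).addCommGroupIsoToAddEquiv.toEquiv.subsingleton_congr.symm

theorem subsingleton_ext_right_iff_of_iso {X Y : C} (e : X ≅ Y) (W : C) (i : ℕ) :
    Subsingleton (Ext W X i) ↔ Subsingleton (Ext W Y i) :=
  ((extFunctorObj W i).mapIso e).addCommGroupIsoToAddEquiv.toEquiv.subsingleton_congr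

theorem postcomp_injective_of_subsingleton_ext_X₃ (hS : S.ShortExact) {W : C} {i : ℕ}
    (h₃ : Subsingleton (Ext W S.X₃ i)) :
    Function.Injective ((Ext.mk₀ S.f).postcomp W (add_zero (i + 1))) := by
  rw [injective_iff_map_eq_zero]
  intro x hx
  obtain ⟨z, rfl⟩ := Ext.covariant_sequence_exact₁ W hS x hx rfl
  rw [Subsingleton.elim z 0, Ext.zero_comp]

theorem subsingleton_ext_X₃ (hS : S.ShortExact) {W : C} {i : ℕ}
    (h₂ : Subsingleton (Ext W S.X₂ i)) (h₁ : Subsingleton (Ext W S.X₁ (i + 1))) :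
    Subsingleton (Ext W S.X₃ i) := by
  refine subsingleton_of_forall_eq 0 fun z => ?_
  obtain ⟨y, rfl⟩ := Ext.covariant_sequence_exact₃ W hS z rfl (Subsingleton.elim _ _)
  rw [Subsingleton.elim y 0, Ext.zero_comp]

theorem subsingleton_ext_of_X₁ (hS : S.ShortExact) {W : C} {i : ℕ}
    (h₂ : Subsingleton (Ext S.X₂ W i)) (h₃ : Subsingleton (Ext S.X₃ W (i + 1))) :
    Subsingleton (Ext S.X₁ W i) := by
  refine subsingleton_of_forall_eq 0 fun x => ?_
  obtain ⟨y, rfl⟩ :=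
    Ext.contravariant_sequence_exact₁ hS W x (add_comm 1 i) (Subsingleton.elim _ _)
  rw [Subsingleton.elim y 0, Ext.comp_zero]

theorem subsingleton_ext_of_X₃ (hS : S.ShortExact) {W : C} {i : ℕ}
    (h₂ : Subsingleton (Ext S.X₂ W (i + 1))) (h₁ : Subsingleton (Ext S.X₁ W i)) :
    Subsingleton (Ext S.X₃ W (i + 1)) := by
  refine subsingleton_of_forall_eq 0 fun z => ?_
  obtain ⟨x, rfl⟩ :=
    Ext.contravariant_sequence_exact₃ hS W z (Subsingleton.elim _ _) (add_comm 1 i)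
  rw [Subsingleton.elim x 0, Ext.comp_zero]

theorem subsingleton_ext_one_iff_surjective_precomp (hS : S.ShortExact) {W : C}
    (h₂ : Subsingleton (Ext S.X₂ W 1)) :
    Subsingleton (Ext S.X₃ W 1) ↔ ∀ φ : S.X₁ ⟶ W, ∃ ψ : S.X₂ ⟶ W, S.f ≫ ψ = φ := by
  constructor
  · intro h φ
    obtain ⟨y, hy⟩ := Ext.contravariant_sequence_exact₁ hS W (Ext.mk₀ φ) (add_zero 1)
      (Subsingleton.elim _ _)
    obtain ⟨ψ, rfl⟩ := (Ext.mk₀_bijective _ _).2 y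
    rw [Ext.mk₀_comp_mk₀] at hy
    exact ⟨ψ, (Ext.mk₀_bijective _ _).1 hy⟩
  · intro h
    refine subsingleton_of_forall_eq 0 fun z => ?_
    obtain ⟨x, rfl⟩ :=
      Ext.contravariant_sequence_exact₃ hS W z (Subsingleton.elim _ _) (add_zero 1)
    obtain ⟨φ, rfl⟩ := (Ext.mk₀_bijective _ _).2 x
    obtain ⟨ψ, rfl⟩ := h φ
    rw [← Ext.mk₀_comp_mk₀]
    exact hS.extClass_comp_assoc _

end AbelianExt

section ModuleExt

variable {A : Type u} [CommRing A]
variable {W X Y Z : Type u} [AddCommGroup W] [Module A W] [AddCommGroup X] [Module A X]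
  [AddCommGroup Y] [Module A Y] [AddCommGroup Z] [Module A Z]

/-- `Ext^i_A(X, Y)` for unbundled modules, as a Yoneda-type group of the abelian category of
modules. Unlike `extM` it carries the composition product and the long exact sequences; the two
vanish simultaneously by `subsingleton_extM_iff`. -/
abbrev ModExt (A : Type u) [CommRing A] (X Y : Type u) [AddCommGroup X] [Module A X]
    [AddCommGroup Y] [Module A Y] (i : ℕ) : Type u :=
  Abelian.Ext.{u} (ModuleCat.of A X) (ModuleCat.of A Y) i

theorem moduleCat_shortExact {f : X →ₗ[A] Y} {g : Y →ₗ[A] Z} (hf : Function.Injective f)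
    (hfg : Function.Exact f g) (hg : Function.Surjective g) :
    (ModuleCat.shortComplexOfCompEqZero f g hfg.linearMap_comp_eq_zero).ShortExact :=
  ModuleCat.shortComplex_shortExact _ hfg hf hg

theorem subsingleton_modExt_left_iff (e : X ≃ₗ[A] Y) (i : ℕ) :
    Subsingleton (ModExt A X W i) ↔ Subsingleton (ModExt A Y W i) :=
  subsingleton_ext_left_iff_of_iso e.toModuleIso _ i

theorem subsingleton_modExt_right_iff (e : X ≃ₗ[A] Y) (i : ℕ) :
    Subsingleton (ModExt A W X i) ↔ Subsingleton (ModExt A W Y i) :=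
  subsingleton_ext_right_iff_of_iso e.toModuleIso _ i

theorem subsingleton_modExt_succ_of_projective [Module.Projective A X] (i : ℕ) :
    Subsingleton (ModExt A X Y (i + 1)) :=
  Abelian.Ext.subsingleton_of_projective _ _ i

theorem subsingleton_modExt_ker [Module.Projective A X] {q : X →ₗ[A] Y}
    (hq : Function.Surjective q) {i : ℕ} (h : Subsingleton (ModExt A Y W (i + 2))) :
    Subsingleton (ModExt A (LinearMap.ker q) W (i + 1)) :=
  subsingleton_ext_of_X₁ (LinearMap.shortExact_shortComplexKer hq)
    (subsingleton_modExt_succ_of_projective i) h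

theorem subsingleton_modExt_one_iff_surjective_dualMap {f : X →ₗ[A] Y} {g : Y →ₗ[A] Z}
    (hf : Function.Injective f) (hfg : Function.Exact f g) (hg : Function.Surjective g)
    (hY : Subsingleton (ModExt A Y A 1)) :
    Subsingleton (ModExt A Z A 1) ↔ Function.Surjective f.dualMap := by
  refine (subsingleton_ext_one_iff_surjective_precomp (moduleCat_shortExact hf hfg hg) hY).trans
    ⟨fun h φ => ?_, fun h φ => ?_⟩
  · obtain ⟨ψ, hψ⟩ := h (ModuleCat.ofHom φ)
    exact ⟨ψ.hom, congrArg ModuleCat.Hom.hom hψ⟩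
  · obtain ⟨ψ, hψ⟩ := h φ.hom
    exact ⟨ModuleCat.ofHom ψ, ModuleCat.hom_ext hψ⟩

theorem dualMap_exact {f : X →ₗ[A] Y} {g : Y →ₗ[A] Z} (hfg : Function.Exact f g)
    (hg : Function.Surjective g) : Function.Exact g.dualMap f.dualMap :=
  LinearMap.exact_lcomp_of_exact_of_surjective A hfg hg

end ModuleExt

section ExtComparison

variable {A : Type u} [CommRing A] {X Y : Type u} [AddCommGroup X] [Module A X]
  [AddCommGroup Y] [Module A Y]

theorem subsingleton_extM_iff_of_projectiveResolution
    (P : ProjectiveResolution (ModuleCat.of A X)) {i j : ℕ}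
    (hij : (ComplexShape.up ℕ).prev i = j) :
    Subsingleton (extM A i X Y) ↔
      ∀ f : P.complex.X i ⟶ ModuleCat.of A Y, P.complex.d (i + 1) i ≫ f = 0 →
        ∃ g : P.complex.X j ⟶ ModuleCat.of A Y, P.complex.d i j ≫ g = f := by
  rw [(P.isoExt (R := A) i (ModuleCat.of A Y)).toLinearEquiv.toEquiv.subsingleton_congr,
    ← ModuleCat.isZero_iff_subsingleton, ← HomologicalComplex.exactAt_iff_isZero_homology,
    HomologicalComplex.exactAt_iff' _ j i (i + 1) hij (by simp), ShortComplex.moduleCat_exact_iff]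
  rfl

theorem subsingleton_modExt_zero_iff :
    Subsingleton (ModExt A X Y 0) ↔ Subsingleton (X →ₗ[A] Y) :=
  (Abelian.Ext.addEquiv₀.trans ModuleCat.homAddEquiv).toEquiv.subsingleton_congr

theorem subsingleton_extM_zero_iff :
    Subsingleton (extM A 0 X Y) ↔ Subsingleton (ModExt A X Y 0) := by
  let P := projectiveResolution (ModuleCat.of A X)
  obtain ⟨ε, hε, dε⟩ : ∃ ε : P.complex.X 0 ⟶ ModuleCat.of A X, Epi ε ∧ P.complex.d 1 0 ≫ ε = 0 :=
    ⟨P.π.f 0, inferInstanceAs (Epi (P.π.f 0)), P.complex_d_comp_π_f_zero⟩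
  rw [subsingleton_extM_iff_of_projectiveResolution P (j := 0) (by simp),
    P.complex.shape 0 0 (by simp), Abelian.Ext.addEquiv₀.toEquiv.subsingleton_congr]
  constructor
  · refine fun h => subsingleton_of_forall_eq 0 fun φ => (cancel_epi ε).1 ?_
    obtain ⟨g, hg⟩ := h (ε ≫ φ) (by rw [← Category.assoc, dε, Limits.zero_comp])
    rw [← hg, Limits.zero_comp, Limits.comp_zero]
  · intro h f hf
    have : Epi (ShortComplex.mk _ _ P.complex_d_comp_π_f_zero).g :=
      inferInstanceAs (Epi (P.π.f 0))
    refine ⟨0, ?_⟩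
    rw [Limits.comp_zero, ← P.exact₀.g_desc f hf,
      show P.exact₀.desc f hf = 0 from Subsingleton.elim (α := ModuleCat.of A X ⟶ _) _ _,
      Limits.comp_zero]

theorem subsingleton_extM_succ_iff (i : ℕ) :
    Subsingleton (extM A (i + 1) X Y) ↔ Subsingleton (ModExt A X Y (i + 1)) := by
  let P := projectiveResolution (ModuleCat.of A X)
  rw [subsingleton_extM_iff_of_projectiveResolution P (j := i) (by simp)]
  constructor
  · refine fun h => subsingleton_of_forall_eq 0 fun α => ?_
    obtain ⟨f, hf, rfl⟩ := P.extMk_surjective α (i + 2) rfl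
    exact (P.extMk_eq_zero_iff f _ rfl hf i rfl).2 (h f hf)
  · intro h f hf
    exact (P.extMk_eq_zero_iff f (i + 2) rfl hf i rfl).1 (Subsingleton.elim _ _)

theorem subsingleton_extM_iff (i : ℕ) :
    Subsingleton (extM A i X Y) ↔ Subsingleton (ModExt A X Y i) :=
  i.casesOn subsingleton_extM_zero_iff subsingleton_extM_succ_iff

end ExtComparison

section ExtEval

variable {A : Type u} [CommRing A]
variable {W X Y Z : Type u} [AddCommGroup W] [Module A W] [AddCommGroup X] [Module A X]
  [AddCommGroup Y] [Module A Y] [AddCommGroup Z] [Module A Z]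

/-- The functoriality `Hom(X, Y) → Hom(Ext^i(W, X), Ext^i(W, Y))` of `Ext` in its second
argument, as a linear map. -/
noncomputable def extMap (W : Type u) [AddCommGroup W] [Module A W] (i : ℕ) :
    (X →ₗ[A] Y) →ₗ[A] ModExt A W X i →ₗ[A] ModExt A W Y i :=
  LinearMap.mk₂ A (fun f α => α.comp (Abelian.Ext.mk₀ (ModuleCat.ofHom f)) (add_zero i))
    (fun f g α => by rw [ModuleCat.ofHom_add, Abelian.Ext.mk₀_add, Abelian.Ext.comp_add])
    (fun r f α => by
      rw [show ModuleCat.ofHom (r • f) = r • ModuleCat.ofHom f from rfl, Abelian.Ext.mk₀_smul,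
        Abelian.Ext.comp_smul])
    (fun f α β => Abelian.Ext.add_comp α β _ _)
    (fun r f α => Abelian.Ext.smul_comp α _ _ r)

theorem extMap_apply (i : ℕ) (f : X →ₗ[A] Y) (α : ModExt A W X i) :
    extMap W i f α = α.comp (Abelian.Ext.mk₀ (ModuleCat.ofHom f)) (add_zero i) := rfl

theorem extMap_comp (i : ℕ) (f : X →ₗ[A] Y) (g : Y →ₗ[A] Z) (α : ModExt A W X i) :
    extMap W i (g ∘ₗ f) α = extMap W i g (extMap W i f α) := by
  simp only [extMap_apply, ModuleCat.ofHom_comp, Abelian.Ext.comp_assoc_of_third_deg_zero,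
    Abelian.Ext.mk₀_comp_mk₀]

theorem extMap_id (i : ℕ) (α : ModExt A W X i) : extMap W i LinearMap.id α = α :=
  Abelian.Ext.comp_mk₀_id α

theorem extMap_exact (i : ℕ) {f : X →ₗ[A] Y} {g : Y →ₗ[A] Z} (hf : Function.Injective f)
    (hfg : Function.Exact f g) (hg : Function.Surjective g) :
    Function.Exact (extMap W i f) (extMap W i g) := by
  refine fun β => ⟨Abelian.Ext.covariant_sequence_exact₂ _ (moduleCat_shortExact hf hfg hg) β, ?_⟩
  rintro ⟨α, rfl⟩
  rw [← extMap_comp, hfg.linearMap_comp_eq_zero, map_zero, LinearMap.zero_apply]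

theorem extMap_injective {t : ℕ} {f : X →ₗ[A] Y} {g : Y →ₗ[A] Z} (hf : Function.Injective f)
    (hfg : Function.Exact f g) (hg : Function.Surjective g)
    (hZ : ∀ i < t, Subsingleton (ModExt A W Z i)) : Function.Injective (extMap W t f) := by
  cases t with
  | zero =>
    have : Mono (ModuleCat.ofHom f) := (ModuleCat.mono_iff_injective _).mpr hf
    exact Abelian.Ext.postcomp_mk₀_injective_of_mono (ModuleCat.of A W) (ModuleCat.ofHom f)
  | succ t =>
    exact postcomp_injective_of_subsingleton_ext_X₃ (moduleCat_shortExact hf hfg hg)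
      (hZ t t.lt_succ_self)

/-- The natural map `Ext^i(W, X) → Hom(X*, Ext^i(W, A))`, sending `α` to `φ ↦ Ext^i(W, φ) α`;
for `i = 0` and `W = A` it is the biduality map of `X`. -/
noncomputable def extEval (W X : Type u) [AddCommGroup W] [Module A W] [AddCommGroup X]
    [Module A X] (i : ℕ) :
    ModExt A W X i →ₗ[A] Module.Dual A X →ₗ[A] ModExt A W A i :=
  (extMap W i).flip

theorem extEval_apply (i : ℕ) (α : ModExt A W X i) (φ : Module.Dual A X) :
    extEval W X i α φ = extMap W i φ α := rfl

theorem extEval_extMap (i : ℕ) (f : X →ₗ[A] Y) (α : ModExt A W X i) :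
    extEval W Y i (extMap W i f α) = extEval W X i α ∘ₗ f.dualMap :=
  LinearMap.ext fun φ => (extMap_comp i f φ α).symm

theorem exists_dualBasis (A P : Type*) [CommRing A] [AddCommGroup P] [Module A P]
    [Module.Finite A P] [Module.Projective A P] :
    ∃ (n : ℕ) (x : Fin n → P) (φ : Fin n → Module.Dual A P), ∀ p, ∑ j, φ j p • x j = p := by
  obtain ⟨n, f, g, -, -, hfg⟩ := Module.Finite.exists_comp_eq_id_of_projective A P
  refine ⟨n, fun j => f (Pi.single j 1), fun j => LinearMap.proj j ∘ₗ g, fun p => ?_⟩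
  calc ∑ j, g p j • f (Pi.single j 1) = f (∑ j, g p j • Pi.single j 1) := by
        simp only [map_sum, map_smul]
    _ = f (g p) := by rw [← pi_eq_sum_univ' (g p)]
    _ = p := LinearMap.congr_fun hfg p

theorem extEval_bijective_of_projective (W P : Type u) [AddCommGroup W] [Module A W]
    [AddCommGroup P] [Module A P] [Module.Finite A P] [Module.Projective A P] (i : ℕ) :
    Function.Bijective (extEval (A := A) W P i) := by
  obtain ⟨n, x, φ, hxφ⟩ := exists_dualBasis A P
  have id_eq : LinearMap.id = ∑ j, LinearMap.toSpanSingleton A P (x j) ∘ₗ φ j := by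
    ext p
    simp [hxφ]
  constructor
  · refine (injective_iff_map_eq_zero _).2 fun α hα => ?_
    rw [← extMap_id i α, id_eq, map_sum, LinearMap.sum_apply]
    refine Finset.sum_eq_zero fun j _ => ?_
    rw [extMap_comp, ← extEval_apply, hα, LinearMap.zero_apply, map_zero]
  · refine fun Φ => ⟨∑ j, extMap W i (LinearMap.toSpanSingleton A P (x j)) (Φ (φ j)), ?_⟩
    ext1 f
    have comp_toSpanSingleton (j : Fin n) :
        f ∘ₗ LinearMap.toSpanSingleton A P (x j) = f (x j) • LinearMap.id := by
      ext
      simp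
    calc extMap W i f (∑ j, extMap W i (LinearMap.toSpanSingleton A P (x j)) (Φ (φ j)))
        = ∑ j, f (x j) • Φ (φ j) := by
          simp only [map_sum, ← extMap_comp, comp_toSpanSingleton, map_smul, LinearMap.smul_apply,
            extMap_id]
      _ = Φ (∑ j, f (x j) • φ j) := by simp only [map_sum, map_smul]
      _ = Φ f := by
          congr 1
          ext p
          conv_rhs => rw [← hxφ p]
          simp [mul_comm]

theorem subsingleton_modExt_of_projective_right {P : Type u} [AddCommGroup P] [Module A P]
    [Module.Finite A P] [Module.Projective A P] {i : ℕ} (_ : Subsingleton (ModExt A W A i)) :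
    Subsingleton (ModExt A W P i) :=
  (extEval_bijective_of_projective W P i).1.subsingleton

end ExtEval

section Syzygy

variable {A : Type u} [CommRing A]
variable {W X Y Z : Type u} [AddCommGroup W] [Module A W] [AddCommGroup X] [Module A X]
  [AddCommGroup Y] [Module A Y] [AddCommGroup Z] [Module A Z] {k t : ℕ}

theorem IsKthSyzygy.congr (e : X ≃ₗ[A] Y) (h : IsKthSyzygy A k (ModuleCat.of A X)) :
    IsKthSyzygy A k (ModuleCat.of A Y) := by
  cases k with
  | zero => trivial
  | succ k =>
    obtain ⟨P, f, hP, hPfin, hf, hZ⟩ := h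
    refine ⟨P, f ∘ₗ e.symm.toLinearMap, hP, hPfin, hf.comp e.symm.injective, ?_⟩
    rwa [LinearMap.range_comp_of_range_eq_top f e.symm.range]

theorem IsKthSyzygy.of_exact [Module.Projective A Y] [Module.Finite A Y] {f : X →ₗ[A] Y}
    {g : Y →ₗ[A] Z} (hf : Function.Injective f) (hfg : Function.Exact f g)
    (hg : Function.Surjective g) (hZ : IsKthSyzygy A k (ModuleCat.of A Z)) :
    IsKthSyzygy A (k + 1) (ModuleCat.of A X) :=
  ⟨ModuleCat.of A Y, f, ‹_›, ‹_›, hf, hZ.congr (hfg.linearEquivOfSurjective hg).symm⟩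

theorem isKthSyzygy_dual [IsNoetherianRing A] [Module.Finite A X]
    (hX : ∀ i < k, Subsingleton (ModExt A X A (i + 1))) :
    IsKthSyzygy A (k + 1) (ModuleCat.of A (Module.Dual A X)) := by
  induction k generalizing X with
  | zero =>
    obtain ⟨n, q, hq⟩ := Module.Finite.exists_fin' A X
    exact ⟨ModuleCat.of A (Module.Dual A (Fin n → A)), q.dualMap,
      inferInstanceAs (Module.Projective A (Module.Dual A (Fin n → A))),
      inferInstanceAs (Module.Finite A (Module.Dual A (Fin n → A))),
      LinearMap.dualMap_injective_of_surjective hq, trivial⟩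
  | succ k ih =>
    obtain ⟨n, q, hq⟩ := Module.Finite.exists_fin' A X
    have exact_ker := q.exact_subtype_ker_map
    exact .of_exact (LinearMap.dualMap_injective_of_surjective hq) (dualMap_exact exact_ker hq)
      ((subsingleton_modExt_one_iff_surjective_dualMap (Submodule.injective_subtype _) exact_ker hq
        (subsingleton_modExt_succ_of_projective 0)).1 (hX 0 k.succ_pos))
      (ih fun i hi => subsingleton_modExt_ker hq (hX (i + 1) (by lia)))

theorem IsKthSyzygy.subsingleton_modExt {i : ℕ} (hX : IsKthSyzygy A k (ModuleCat.of A X))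
    (hik : i < k) (hW : ∀ j ≤ i, Subsingleton (ModExt A W A j)) :
    Subsingleton (ModExt A W X i) := by
  induction k generalizing X i with
  | zero => lia
  | succ k ih =>
    obtain ⟨P, f, _, _, hf, hZ⟩ := hX
    have : Subsingleton (ModExt A W P i) := subsingleton_modExt_of_projective_right (hW i le_rfl)
    refine (extMap_injective hf f.exact_map_mkQ_range (Submodule.mkQ_surjective _)
      fun j hj => ?_).subsingleton
    exact ih hZ (by lia) fun l hl => hW l (by lia)

theorem IsKthSyzygy.extEval_injective (hX : IsKthSyzygy A (t + 1) (ModuleCat.of A X))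
    (hW : ∀ i < t, Subsingleton (ModExt A W A i)) :
    Function.Injective (extEval (A := A) W X t) := by
  obtain ⟨P, f, _, _, hf, hZ⟩ := hX
  have extMap_inj : Function.Injective (extMap W t f) :=
    extMap_injective hf f.exact_map_mkQ_range (Submodule.mkQ_surjective _)
      fun i hi => hZ.subsingleton_modExt hi fun j hj => hW j (hj.trans_lt hi)
  refine (injective_iff_map_eq_zero _).2 fun α hα => extMap_inj ?_
  refine (extEval_bijective_of_projective W P t).1 ?_
  rw [extEval_extMap, hα, LinearMap.zero_comp, map_zero, map_zero]

theorem extEval_surjective_of_exact {f : X →ₗ[A] Y} {g : Y →ₗ[A] Z} (hf : Function.Injective f)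
    (hfg : Function.Exact f g) (hg : Function.Surjective g) (hf' : Function.Surjective f.dualMap)
    (hY : Function.Surjective (extEval (A := A) W Y t))
    (hZ : Function.Injective (extEval (A := A) W Z t)) :
    Function.Surjective (extEval (A := A) W X t) := by
  intro Φ
  obtain ⟨β, hβ⟩ := hY (Φ ∘ₗ f.dualMap)
  have extMap_β : extMap W t g β = 0 := by
    refine hZ ?_
    rw [extEval_extMap, hβ, LinearMap.comp_assoc,
      (dualMap_exact hfg hg).linearMap_comp_eq_zero, LinearMap.comp_zero, map_zero]
  obtain ⟨α, rfl⟩ := (extMap_exact t hf hfg hg β).1 extMap_β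
  rw [extEval_extMap] at hβ
  exact ⟨α, (LinearMap.cancel_right hf').1 hβ⟩

end Syzygy

section GDimZero

variable {A : Type u} [CommRing A]
variable {W X Y Z : Type u} [AddCommGroup W] [Module A W] [AddCommGroup X] [Module A X]
  [AddCommGroup Y] [Module A Y] [AddCommGroup Z] [Module A Z] {t : ℕ}

theorem isGDimZero_iff : IsGDimZero A X ↔
    Module.Finite A X ∧ Function.Bijective (Module.Dual.eval A X) ∧
      (∀ i, Subsingleton (ModExt A X A (i + 1))) ∧
      ∀ i, Subsingleton (ModExt A (Module.Dual A X) A (i + 1)) := by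
  simp only [IsGDimZero, subsingleton_extM_iff]
  have forall_pos_iff (p : ℕ → Prop) : (∀ i, 0 < i → p i) ↔ ∀ i, p (i + 1) :=
    ⟨fun h i => h _ i.succ_pos, fun h i hi => Nat.succ_pred_eq_of_pos hi ▸ h _⟩
  rw [forall_pos_iff, forall_pos_iff]

theorem IsGDimZero.subsingleton_modExt (h : IsGDimZero A X) (i : ℕ) :
    Subsingleton (ModExt A X A (i + 1)) :=
  (isGDimZero_iff.1 h).2.2.1 i

theorem IsGDimZero.subsingleton_modExt_dual (h : IsGDimZero A X) (i : ℕ) :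
    Subsingleton (ModExt A (Module.Dual A X) A (i + 1)) :=
  (isGDimZero_iff.1 h).2.2.2 i

theorem IsGDimZero.isKthSyzygy [IsNoetherianRing A] (h : IsGDimZero A X) (k : ℕ) :
    IsKthSyzygy A k (ModuleCat.of A X) := by
  cases k with
  | zero => trivial
  | succ k =>
    have := h.1
    exact (isKthSyzygy_dual fun i _ => h.subsingleton_modExt_dual i).congr
      (LinearEquiv.ofBijective _ h.2.1).symm

theorem IsGDimZero.extEval_injective [IsNoetherianRing A] (h : IsGDimZero A X)
    (hW : ∀ i < t, Subsingleton (ModExt A W A i)) : Function.Injective (extEval (A := A) W X t) :=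
  (h.isKthSyzygy (t + 1)).extEval_injective hW

theorem IsGDimZero.extEval_surjective [IsNoetherianRing A] (h : IsGDimZero A X)
    (hW : ∀ i < t, Subsingleton (ModExt A W A i)) :
    Function.Surjective (extEval (A := A) W X t) := by
  have := h.1
  let biduality : X ≃ₗ[A] Module.Dual A (Module.Dual A X) := .ofBijective _ h.2.1
  obtain ⟨n, q, hq⟩ := Module.Finite.exists_fin' A (Module.Dual A X)
  have exact_ker := q.exact_subtype_ker_map
  have isKthSyzygy_dual_ker : IsKthSyzygy A (t + 1) (ModuleCat.of A (Module.Dual A q.ker)) :=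
    isKthSyzygy_dual fun i _ => subsingleton_modExt_ker hq (h.subsingleton_modExt_dual (i + 1))
  refine extEval_surjective_of_exact (f := q.dualMap ∘ₗ biduality.toLinearMap)
    ((LinearMap.dualMap_injective_of_surjective hq).comp biduality.injective)
    (LinearEquiv.precomp_exact_iff_exact.2 (dualMap_exact exact_ker hq))
    ((subsingleton_modExt_one_iff_surjective_dualMap (Submodule.injective_subtype _) exact_ker hq
      (subsingleton_modExt_succ_of_projective 0)).1 (h.subsingleton_modExt_dual 0))
    (fun φ => ?_) (extEval_bijective_of_projective _ _ t).2
    (isKthSyzygy_dual_ker.extEval_injective hW)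
  obtain ⟨y, rfl⟩ := hq φ
  exact ⟨Module.Dual.eval A _ y, rfl⟩

theorem bijective_dualEval_of_exact {f : X →ₗ[A] Y} {g : Y →ₗ[A] Z} (hfg : Function.Exact f g)
    (hg : Function.Surjective g) (hf' : Function.Surjective f.dualMap)
    (hg'' : Function.Surjective g.dualMap.dualMap)
    (hX : Function.Surjective (Module.Dual.eval A X))
    (hY : Function.Bijective (Module.Dual.eval A Y)) :
    Function.Bijective (Module.Dual.eval A Z) :=
  LinearMap.bijective_of_surjective_of_bijective_of_right_exact f g f.dualMap.dualMap
    g.dualMap.dualMap _ _ _ rfl rfl hfg (dualMap_exact (dualMap_exact hfg hg) hf') hX hY hg hg''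

theorem IsGDimZero.of_exact {f : X →ₗ[A] Y} {g : Y →ₗ[A] Z} (hf : Function.Injective f)
    (hfg : Function.Exact f g) (hg : Function.Surjective g) (hX : IsGDimZero A X)
    (hY : IsGDimZero A Y) (hZ : Subsingleton (ModExt A Z A 1)) : IsGDimZero A Z := by
  have dual_inj := LinearMap.dualMap_injective_of_surjective hg
  have dual_exact := dualMap_exact hfg hg
  have dual_surj := (subsingleton_modExt_one_iff_surjective_dualMap hf hfg hg
    (hY.subsingleton_modExt 0)).1 hZ
  have bidual_surj := (subsingleton_modExt_one_iff_surjective_dualMap dual_inj dual_exact dual_surj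
    (hY.subsingleton_modExt_dual 0)).1 (hX.subsingleton_modExt_dual 0)
  refine isGDimZero_iff.2 ⟨have := hY.1; .of_surjective g hg,
    bijective_dualEval_of_exact hfg hg dual_surj bidual_surj hX.2.1.2 hY.2.1, fun i => ?_,
    fun i => ?_⟩
  · cases i with
    | zero => exact hZ
    | succ i =>
      exact subsingleton_ext_of_X₃ (moduleCat_shortExact hf hfg hg)
        (hY.subsingleton_modExt (i + 1)) (hX.subsingleton_modExt i)
  · exact subsingleton_ext_of_X₁ (moduleCat_shortExact dual_inj dual_exact dual_surj)
      (hY.subsingleton_modExt_dual i) (hX.subsingleton_modExt_dual (i + 1))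

end GDimZero

section GDimension

variable {A : Type u} [CommRing A] {M : Type u} [AddCommGroup M] [Module A M] {n : ℕ}

theorem GDimLE.subsingleton_modExt {i : ℕ} (h : GDimLE A n (ModuleCat.of A M)) (hni : n ≤ i) :
    Subsingleton (ModExt A M A (i + 1)) := by
  induction n generalizing M i with
  | zero => exact IsGDimZero.subsingleton_modExt h i
  | succ n ih =>
    obtain ⟨G, f, hG, hf, hK⟩ := h
    obtain ⟨j, rfl⟩ := Nat.exists_eq_add_of_le' hni
    exact subsingleton_ext_of_X₃ (LinearMap.shortExact_shortComplexKer hf)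
      (hG.subsingleton_modExt _) (ih hK (Nat.le_add_left n j))

theorem GDimLE.pred (h : GDimLE A (n + 1) (ModuleCat.of A M))
    (hM : Subsingleton (ModExt A M A (n + 1))) : GDimLE A n (ModuleCat.of A M) := by
  induction n generalizing M with
  | zero =>
    obtain ⟨G, f, hG, hf, hK⟩ := h
    exact .of_exact (Submodule.injective_subtype _) f.exact_subtype_ker_map hf hK hG hM
  | succ n ih =>
    obtain ⟨G, f, hG, hf, hK⟩ := h
    exact ⟨G, f, hG, hf, ih hK (subsingleton_ext_of_X₁ (LinearMap.shortExact_shortComplexKer hf)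
      (hG.subsingleton_modExt n) hM)⟩

theorem GDimLE.isGDimZero (h : GDimLE A n (ModuleCat.of A M))
    (hM : ∀ i, Subsingleton (ModExt A M A (i + 1))) : IsGDimZero A M := by
  induction n with
  | zero => exact h
  | succ n ih => exact ih (h.pred (hM n))

theorem exists_gDimLE_of_gDim_lt_top (h : GDim A M < ⊤) : ∃ n, GDimLE A n (ModuleCat.of A M) := by
  obtain ⟨_, ⟨n, -, hn⟩, -⟩ := sInf_lt_iff.1 h
  exact ⟨n, hn⟩

theorem gDim_eq_zero_iff : GDim A M = 0 ↔ IsGDimZero A M := by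
  constructor
  · intro h
    have hlt : GDim A M < 1 := h ▸ zero_lt_one
    obtain ⟨_, ⟨n, rfl, hn⟩, hn1⟩ := sInf_lt_iff.1 hlt
    obtain rfl : n = 0 := by exact_mod_cast Order.lt_one_iff.1 hn1
    exact hn
  · exact fun h => nonpos_iff_eq_zero.1 (sInf_le ⟨0, by simp, h⟩)

end GDimension

section Depth

variable {A : Type u} [CommRing A] {I : Ideal A}
variable {X Y Z : Type u} [AddCommGroup X] [Module A X] [AddCommGroup Y] [Module A Y]
  [AddCommGroup Z] [Module A Z] {k : ℕ}

theorem natCast_le_edepth_iff :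
    (k : ℕ∞) ≤ edepth A I X ↔ ∀ i < k, Subsingleton (ModExt A (A ⧸ I) X i) := by
  simp only [edepth, le_sInf_iff, Set.mem_ofPred_eq, subsingleton_extM_iff]
  constructor
  · intro h i hi
    by_contra hne
    exact hi.not_ge (by exact_mod_cast h i ⟨i, rfl, hne⟩)
  · rintro h _ ⟨i, rfl, hne⟩
    by_contra hlt
    exact hne (h i (by exact_mod_cast not_le.1 hlt))

theorem subsingleton_modExt_of_lt_edepth (h : (k : ℕ∞) < edepth A I X) :
    Subsingleton (ModExt A (A ⧸ I) X k) :=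
  natCast_le_edepth_iff.1 (Order.add_one_le_of_lt h) k k.lt_succ_self

theorem edepth_le_of_not_subsingleton (h : ¬ Subsingleton (ModExt A (A ⧸ I) X k)) :
    edepth A I X ≤ k :=
  not_lt.1 fun hlt => h (subsingleton_modExt_of_lt_edepth hlt)

theorem not_subsingleton_modExt_of_edepth_eq (h : edepth A I X = k) :
    ¬ Subsingleton (ModExt A (A ⧸ I) X k) := by
  intro hk
  have : ((k + 1 : ℕ) : ℕ∞) ≤ edepth A I X := natCast_le_edepth_iff.2 fun i hi => by
    obtain hik | rfl := Nat.lt_succ_iff_lt_or_eq.1 hi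
    · exact subsingleton_modExt_of_lt_edepth (h ▸ Nat.cast_lt.2 hik)
    · exact hk
  exact k.lt_succ_self.not_ge (by exact_mod_cast h ▸ this)

theorem edepth_congr (e : X ≃ₗ[A] Y) : edepth A I X = edepth A I Y :=
  ENat.eq_of_forall_natCast_le_iff fun k => by
    simp only [natCast_le_edepth_iff, subsingleton_modExt_right_iff e]

section ShortExact

variable {f : X →ₗ[A] Y} {g : Y →ₗ[A] Z}

theorem edepth_le_edepth_add_one (hf : Function.Injective f) (hfg : Function.Exact f g)
    (hg : Function.Surjective g) (h : edepth A I Z < edepth A I Y) :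
    edepth A I X ≤ edepth A I Z + 1 := by
  obtain ⟨k, hk⟩ := ENat.ne_top_iff_exists.1 h.ne_top
  rw [← hk] at h ⊢
  refine edepth_le_of_not_subsingleton (k := k + 1) fun hX =>
    not_subsingleton_modExt_of_edepth_eq hk.symm ?_
  exact subsingleton_ext_X₃ (moduleCat_shortExact hf hfg hg)
    (subsingleton_modExt_of_lt_edepth h) hX

theorem edepth_add_one_le_of_not_injective_extMap (hf : Function.Injective f)
    (hfg : Function.Exact f g) (hg : Function.Surjective g)
    (h : ¬ Function.Injective (extMap (A ⧸ I) k f)) : edepth A I Z + 1 ≤ k := by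
  refine Order.add_one_le_of_lt (not_le.1 fun hk => h ?_)
  exact extMap_injective hf hfg hg (natCast_le_edepth_iff.1 hk)

theorem edepth_add_one_le (hf : Function.Injective f) (hfg : Function.Exact f g)
    (hg : Function.Surjective g) (h : edepth A I X < edepth A I Y) :
    edepth A I Z + 1 ≤ edepth A I X := by
  obtain ⟨k, hk⟩ := ENat.ne_top_iff_exists.1 h.ne_top
  have hY : Subsingleton (ModExt A (A ⧸ I) Y k) := subsingleton_modExt_of_lt_edepth (hk ▸ h)
  rw [← hk]
  exact edepth_add_one_le_of_not_injective_extMap hf hfg hg fun hinj =>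
    not_subsingleton_modExt_of_edepth_eq hk.symm hinj.subsingleton

end ShortExact

theorem IsKthSyzygy.min_le_edepth (h : IsKthSyzygy A k (ModuleCat.of A X)) :
    min (k : ℕ∞) (edepth A I A) ≤ edepth A I X := by
  refine ENat.forall_natCast_le_iff_le.1 fun m hm => natCast_le_edepth_iff.2 fun i hi => ?_
  obtain ⟨hmk, hmA⟩ := le_min_iff.1 hm
  exact h.subsingleton_modExt (hi.trans_le (Nat.cast_le.1 hmk)) fun j hj =>
    natCast_le_edepth_iff.1 hmA j (hj.trans_lt hi)

theorem edepth_self_le_of_isKthSyzygy (h : ∀ k, IsKthSyzygy A k (ModuleCat.of A X)) :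
    edepth A I A ≤ edepth A I X :=
  ENat.forall_natCast_le_iff_le.1 fun k hk => (le_min le_rfl hk).trans (h k).min_le_edepth

theorem IsGDimZero.edepth_self_le [IsNoetherianRing A] (h : IsGDimZero A X) :
    edepth A I A ≤ edepth A I X :=
  edepth_self_le_of_isKthSyzygy h.isKthSyzygy

theorem edepth_self_le_of_projective [Module.Projective A X] [Module.Finite A X] :
    edepth A I A ≤ edepth A I X :=
  ENat.forall_natCast_le_iff_le.1 fun _ hk => natCast_le_edepth_iff.2 fun i hi =>
    subsingleton_modExt_of_projective_right (natCast_le_edepth_iff.1 hk i hi)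

theorem rdepth_lt_top [IsNoetherianRing A] [IsLocalRing A] : rdepth A < ⊤ := by
  obtain ⟨d, hd⟩ : ∃ d : ℕ, ringKrullDim A ≤ d :=
    ⟨_, (Order.krullDim_eq_length_of_finiteDimensionalOrder (α := PrimeSpectrum A)).le⟩
  refine lt_of_lt_of_le (b := ((d + 1 : ℕ) : ℕ∞)) (not_le.1 fun hdepth => ?_) le_top
  obtain ⟨rs, hlen, -, hreg⟩ := ModuleCat.exists_isRegular_of_exists_subsingleton_ext
    (IsLocalRing.maximalIdeal A) (d + 1) (ModuleCat.of A A)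
    (by simpa [lt_top_iff_ne_top] using Ideal.IsPrime.ne_top')
    (ModuleCat.of A (A ⧸ IsLocalRing.maximalIdeal A))
    (by rw [Module.support_eq_zeroLocus, Ideal.annihilator_quotient])
    (natCast_le_edepth_iff.1 hdepth)
  have : Nontrivial (A ⧸ Ideal.ofList rs) :=
    Ideal.Quotient.nontrivial_iff.2 (by simpa using hreg.top_ne_smul.symm)
  have length_le : (rs.length : WithBot ℕ∞) ≤ ringKrullDim A :=
    ringKrullDim_add_length_eq_ringKrullDim_of_isRegular rs hreg ▸
      le_add_of_nonneg_left ringKrullDim_nonneg_of_nontrivial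
  rw [hlen] at length_le
  exact d.lt_succ_self.not_ge (by exact_mod_cast length_le.trans hd)

end Depth

section AuslanderBridger

variable {A : Type u} [CommRing A]
variable {W X Y Z : Type u} [AddCommGroup W] [Module A W] [AddCommGroup X] [Module A X]
  [AddCommGroup Y] [Module A Y] [AddCommGroup Z] [Module A Z]

theorem smul_modExt_eq_zero {r : A} (hr : r ∈ Module.annihilator A W) (i : ℕ)
    (α : ModExt A W X i) : r • α = 0 := by
  have smul_id : r • 𝟙 (ModuleCat.of A W) = 0 := by
    ext w
    exact Module.mem_annihilator.1 hr w
  rw [← Abelian.Ext.mk₀_id_comp α, ← Abelian.Ext.smul_comp, ← Abelian.Ext.mk₀_smul, smul_id,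
    Abelian.Ext.mk₀_zero, Abelian.Ext.zero_comp]

variable [IsLocalRing A]

local notation "𝔪" => IsLocalRing.maximalIdeal A

theorem exists_surjective_residue [Module.Finite A X] [Nontrivial X] :
    ∃ q : X →ₗ[A] A ⧸ 𝔪, Function.Surjective q := by
  obtain ⟨N, hN, -⟩ := (eq_top_or_exists_le_coatom (⊥ : Submodule A X)).resolve_left bot_ne_top
  have : IsSimpleModule A (X ⧸ N) := isSimpleModule_iff_isCoatom.2 hN
  obtain ⟨I, hI, ⟨e⟩⟩ := isSimpleModule_iff_quot_maximal.1 this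
  obtain rfl := IsLocalRing.eq_maximalIdeal hI
  exact ⟨e.toLinearMap ∘ₗ N.mkQ, e.surjective.comp N.mkQ_surjective⟩

theorem exists_linearMap_ne_zero [Module.Finite A X] [Nontrivial X] [Nontrivial Y]
    (hY : 𝔪 ≤ Module.annihilator A Y) : ∃ φ : X →ₗ[A] Y, φ ≠ 0 := by
  obtain ⟨q, hq⟩ := exists_surjective_residue (A := A) (X := X)
  obtain ⟨y, hy⟩ := exists_ne (0 : Y)
  let ψ : (A ⧸ 𝔪) →ₗ[A] Y := Submodule.liftQ _ (LinearMap.toSpanSingleton A Y y) fun r hr =>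
    Module.mem_annihilator.1 (hY hr) y
  have hψ : ψ (Submodule.Quotient.mk 1) = y := one_smul A y
  obtain ⟨x, hx⟩ := hq (Submodule.Quotient.mk 1)
  exact ⟨ψ ∘ₗ q, fun h => hy (by rw [← hψ, ← hx]; exact LinearMap.congr_fun h x)⟩

variable {t : ℕ}

-- A nonzero map `coker (Y* → X*) → Extᵗ(k, A)` is evaluation at a class in the kernel.
theorem not_injective_extMap {f : X →ₗ[A] Y} [Module.Finite A (Module.Dual A X)]
    (hf : ¬ Function.Surjective f.dualMap)
    (hX : Function.Surjective (extEval (A := A) (A ⧸ 𝔪) X t))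
    (hY : Function.Injective (extEval (A := A) (A ⧸ 𝔪) Y t))
    (hA : ¬ Subsingleton (ModExt A (A ⧸ 𝔪) A t)) :
    ¬ Function.Injective (extMap (A ⧸ 𝔪) t f) := by
  have : Nontrivial (Module.Dual A X ⧸ f.dualMap.range) :=
    Submodule.Quotient.nontrivial_iff.2 fun h => hf (LinearMap.range_eq_top.1 h)
  have : Nontrivial (ModExt A (A ⧸ 𝔪) A t) := not_subsingleton_iff_nontrivial.1 hA
  have annihilated : 𝔪 ≤ Module.annihilator A (ModExt A (A ⧸ 𝔪) A t) := fun r hr =>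
    Module.mem_annihilator.2 (smul_modExt_eq_zero (by rwa [Ideal.annihilator_quotient]) t)
  obtain ⟨φ, hφ⟩ := exists_linearMap_ne_zero (X := Module.Dual A X ⧸ f.dualMap.range) annihilated
  obtain ⟨α, hα⟩ := hX (φ ∘ₗ f.dualMap.range.mkQ)
  intro hinj
  have extMap_α : extMap (A ⧸ 𝔪) t f α = 0 := by
    refine hY ?_
    rw [extEval_extMap, hα, LinearMap.comp_assoc, LinearMap.range_mkQ_comp, LinearMap.comp_zero,
      map_zero]
  obtain rfl : α = 0 := hinj (extMap_α.trans (map_zero _).symm)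
  refine hφ (Submodule.linearMap_qext _ ?_)
  rw [← hα, map_zero, LinearMap.zero_comp]

variable [IsNoetherianRing A]

theorem edepth_add_one_le_rdepth {f : X →ₗ[A] Y} {g : Y →ₗ[A] Z} (hf : Function.Injective f)
    (hfg : Function.Exact f g) (hg : Function.Surjective g) (hX : IsGDimZero A X)
    (hY : IsGDimZero A Y) (hZ : ¬ Subsingleton (ModExt A Z A 1)) :
    edepth A 𝔪 Z + 1 ≤ rdepth A := by
  have := hX.1
  obtain ⟨t, ht⟩ := ENat.ne_top_iff_exists.1 (rdepth_lt_top (A := A)).ne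
  have ext_lt : ∀ i < t, Subsingleton (ModExt A (A ⧸ 𝔪) A i) := natCast_le_edepth_iff.1 ht.le
  rw [← ht]
  refine edepth_add_one_le_of_not_injective_extMap hf hfg hg (not_injective_extMap ?_
    (hX.extEval_surjective ext_lt) (hY.extEval_injective ext_lt)
    (not_subsingleton_modExt_of_edepth_eq ht.symm))
  rwa [← subsingleton_modExt_one_iff_surjective_dualMap hf hfg hg (hY.subsingleton_modExt 0)]

theorem GDimLE.edepth_add_succ_le_rdepth {n : ℕ} (h : GDimLE A (n + 1) (ModuleCat.of A X))
    (hX : ¬ Subsingleton (ModExt A X A (n + 1))) :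
    edepth A 𝔪 X + (n + 1 : ℕ) ≤ rdepth A := by
  induction n generalizing X with
  | zero =>
    obtain ⟨G, f, hG, hf, hK⟩ := h
    exact edepth_add_one_le_rdepth (Submodule.injective_subtype _) f.exact_subtype_ker_map hf hK hG
      hX
  | succ n ih =>
    obtain ⟨G, f, hG, hf, hK⟩ := h
    have hker := ih hK fun h => hX (subsingleton_ext_of_X₃
      (LinearMap.shortExact_shortComplexKer hf) (hG.subsingleton_modExt _) h)
    have ker_lt : edepth A 𝔪 f.ker < edepth A 𝔪 G := by
      refine lt_of_lt_of_le ?_ (hker.trans hG.edepth_self_le)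
      have := (le_self_add.trans hker).trans_lt rdepth_lt_top
      exact add_comm (_ : ℕ∞) _ ▸ ENat.lt_add_left this.ne (by simp)
    calc edepth A 𝔪 X + (n + 1 + 1 : ℕ) = edepth A 𝔪 X + 1 + (n + 1 : ℕ) := by
          push_cast; ring
      _ ≤ edepth A 𝔪 f.ker + (n + 1 : ℕ) := by
          gcongr
          exact edepth_add_one_le (Submodule.injective_subtype _) f.exact_subtype_ker_map hf ker_lt
      _ ≤ rdepth A := hker

theorem GDimLE.edepth_add_le_rdepth {n r : ℕ} (h : GDimLE A n (ModuleCat.of A X))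
    (hX : ¬ Subsingleton (ModExt A X A (r + 1))) :
    edepth A 𝔪 X + (r + 1 : ℕ) ≤ rdepth A := by
  induction n with
  | zero => exact absurd (h.subsingleton_modExt r.zero_le) hX
  | succ n ih =>
    by_cases hn : Subsingleton (ModExt A X A (n + 1))
    · exact ih (h.pred hn)
    have : r ≤ n := Nat.lt_succ_iff.1 (not_le.1 fun hle => hX (h.subsingleton_modExt hle))
    refine le_trans ?_ (h.edepth_add_succ_le_rdepth hn)
    gcongr

end AuslanderBridger

section Localization

variable {A : Type u} [CommRing A] (S : Submonoid A)
variable {X Y Z : Type u} [AddCommGroup X] [Module A X] [AddCommGroup Y] [Module A Y]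
  [AddCommGroup Z] [Module A Z]

/-- The functional on `S⁻¹X` induced by a functional on `X`, for an arbitrary localization
`g : X → S⁻¹X`; not fixing `g` allows the construction to be iterated. -/
noncomputable def localizedDual {X' : Type u} [AddCommGroup X'] [Module A X']
    [Module (Localization S) X'] [IsScalarTower A (Localization S) X'] (g : X →ₗ[A] X')
    [IsLocalizedModule S g] : Module.Dual A X →ₗ[A] Module.Dual (Localization S) X' :=
  IsLocalizedModule.mapExtendScalars S g (Algebra.linearMap A (Localization S)) (Localization S)

section localizedDual

variable {X' : Type u} [AddCommGroup X'] [Module A X'] [Module (Localization S) X']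
  [IsScalarTower A (Localization S) X'] (g : X →ₗ[A] X') [IsLocalizedModule S g]

instance [IsNoetherianRing A] [Module.Finite A X] : IsLocalizedModule S (localizedDual S g) :=
  have := Module.finitePresentation_of_finite A X
  Module.FinitePresentation.isLocalizedModule_mapExtendScalars S _ _ _

theorem localizedDual_apply_apply (φ : Module.Dual A X) (x : X) :
    localizedDual S g φ (g x) = algebraMap A (Localization S) (φ x) :=
  IsLocalizedModule.map_apply S g (Algebra.linearMap A (Localization S)) φ x

theorem linearMap_ext_of_isLocalizedModule {N : Type u} [AddCommGroup N]
    [Module (Localization S) N] {φ ψ : X' →ₗ[Localization S] N} (h : ∀ x, φ (g x) = ψ (g x)) :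
    φ = ψ := by
  ext y
  obtain ⟨⟨x, s⟩, hs⟩ := IsLocalizedModule.surj S g y
  refine (IsLocalization.map_units (Localization S) s).smul_left_cancel.1 ?_
  have hs' : algebraMap A (Localization S) s • y = g x := (algebraMap_smul _ _ y).trans hs
  rw [← map_smul, ← map_smul, hs', h]

end localizedDual

theorem localizedModule_map_exact {f : X →ₗ[A] Y} {g : Y →ₗ[A] Z} (hfg : Function.Exact f g) :
    Function.Exact (LocalizedModule.map S f) (LocalizedModule.map S g) :=
  LocalizedModule.map_exact S f g hfg

theorem IsGDimZero.congr (e : X ≃ₗ[A] Y) (h : IsGDimZero A X) : IsGDimZero A Y := by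
  have := h.1
  have : Module.IsReflexive A X := ⟨h.2.1⟩
  have := Module.equiv e
  exact isGDimZero_iff.2 ⟨.equiv e, Module.bijective_dual_eval A Y,
    fun i => (subsingleton_modExt_left_iff e _).1 (h.subsingleton_modExt i),
    fun i => (subsingleton_modExt_left_iff e.dualMap _).2 (h.subsingleton_modExt_dual i)⟩

theorem GDimLE.congr {n : ℕ} (e : X ≃ₗ[A] Y) (h : GDimLE A n (ModuleCat.of A X)) :
    GDimLE A n (ModuleCat.of A Y) := by
  cases n with
  | zero => exact IsGDimZero.congr e h
  | succ n =>
    obtain ⟨G, f, hG, hf, hK⟩ := h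
    refine ⟨G, e.toLinearMap ∘ₗ f, hG, e.surjective.comp hf, ?_⟩
    rwa [LinearEquiv.ker_comp]

theorem IsKthSyzygy.localizedModule {k : ℕ} (h : IsKthSyzygy A k (ModuleCat.of A X)) :
    IsKthSyzygy (Localization S) k (ModuleCat.of (Localization S) (LocalizedModule S X)) := by
  induction k generalizing X with
  | zero => trivial
  | succ k ih =>
    obtain ⟨P, f, _, _, hf, hZ⟩ := h
    exact .of_exact (LocalizedModule.map_injective S f hf)
      (localizedModule_map_exact S f.exact_map_mkQ_range)
      (LocalizedModule.map_surjective S _ (Submodule.mkQ_surjective _)) (ih hZ)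

local notation "ι" => LocalizedModule.mkLinearMap S

variable [IsNoetherianRing A]

theorem surjective_dualMap_map_iff [Module.Finite A X] [Module.Finite A Y] (f : X →ₗ[A] Y) :
    Function.Surjective (LocalizedModule.map S f).dualMap ↔
      Function.Surjective (LocalizedModule.map S f.dualMap) := by
  have dualMap_eq : (LocalizedModule.map S f).dualMap.restrictScalars A =
      IsLocalizedModule.map S (localizedDual S (ι Y)) (localizedDual S (ι X)) f.dualMap := by
    refine IsLocalizedModule.linearMap_ext S (localizedDual S (ι Y)) (localizedDual S (ι X)) ?_
    rw [IsLocalizedModule.map_comp]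
    ext φ : 1
    refine linearMap_ext_of_isLocalizedModule S (ι X) fun x => ?_
    trans localizedDual S (ι Y) φ (ι Y (f x))
    · exact congrArg (localizedDual S (ι Y) φ) (IsLocalizedModule.map_apply S (ι X) (ι Y) f x)
    · exact (localizedDual_apply_apply S _ φ (f x)).trans
        (localizedDual_apply_apply S _ (f.dualMap φ) x).symm
  rw [← IsLocalizedModule.map_surjective_iff_localizedModuleMap_surjective
    (localizedDual S (ι Y)) (localizedDual S (ι X)), ← dualMap_eq]
  rfl

theorem bijective_dualEval_localizedModule [Module.Finite A X]
    (h : Function.Bijective (Module.Dual.eval A X)) :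
    Function.Bijective (Module.Dual.eval (Localization S) (LocalizedModule S X)) := by
  have eval_eq : (Module.Dual.eval (Localization S) (LocalizedModule S X)).restrictScalars A =
      IsLocalizedModule.map S (ι X) (localizedDual S (localizedDual S (ι X)))
        (Module.Dual.eval A X) := by
    refine IsLocalizedModule.linearMap_ext S (ι X) (localizedDual S (localizedDual S (ι X))) ?_
    rw [IsLocalizedModule.map_comp]
    ext x : 1
    refine linearMap_ext_of_isLocalizedModule S (localizedDual S (ι X)) fun φ => ?_
    exact (localizedDual_apply_apply S _ φ x).trans
      (localizedDual_apply_apply S (localizedDual S (ι X)) (Module.Dual.eval A X x) φ).symm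
  suffices Function.Bijective ((Module.Dual.eval (Localization S)
      (LocalizedModule S X)).restrictScalars A) from this
  rw [eval_eq]
  exact ⟨IsLocalizedModule.map_injective S _ _ _ h.1, IsLocalizedModule.map_surjective S _ _ _ h.2⟩

theorem subsingleton_modExt_localizedModule [Module.Finite A X] {i : ℕ}
    (h : Subsingleton (ModExt A X A (i + 1))) :
    Subsingleton (ModExt (Localization S) (LocalizedModule S X) (Localization S) (i + 1)) := by
  induction i generalizing X with
  | zero =>
    obtain ⟨n, q, hq⟩ := Module.Finite.exists_fin' A X
    have exact_ker := q.exact_subtype_ker_map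
    have ker_inj := Submodule.injective_subtype q.ker
    refine (subsingleton_modExt_one_iff_surjective_dualMap
      (LocalizedModule.map_injective S _ ker_inj) (localizedModule_map_exact S exact_ker)
      (LocalizedModule.map_surjective S q hq) (subsingleton_modExt_succ_of_projective 0)).2 ?_
    rw [surjective_dualMap_map_iff]
    exact LocalizedModule.map_surjective S _ ((subsingleton_modExt_one_iff_surjective_dualMap
      ker_inj exact_ker hq (subsingleton_modExt_succ_of_projective 0)).1 h)
  | succ i ih =>
    obtain ⟨n, q, hq⟩ := Module.Finite.exists_fin' A X
    exact subsingleton_ext_of_X₃ (moduleCat_shortExact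
      (LocalizedModule.map_injective S _ (Submodule.injective_subtype _))
      (localizedModule_map_exact S q.exact_subtype_ker_map)
      (LocalizedModule.map_surjective S q hq)) (subsingleton_modExt_succ_of_projective _)
      (ih (subsingleton_modExt_ker hq h))

theorem IsGDimZero.localizedModule (h : IsGDimZero A X) :
    IsGDimZero (Localization S) (LocalizedModule S X) := by
  have := h.1
  let dualEquiv : LocalizedModule S (Module.Dual A X) ≃ₗ[Localization S]
      Module.Dual (Localization S) (LocalizedModule S X) :=
    (IsLocalizedModule.iso S (localizedDual S (ι X))).extendScalarsOfIsLocalization S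
      (Localization S)
  exact isGDimZero_iff.2 ⟨inferInstance, bijective_dualEval_localizedModule S h.2.1,
    fun i => subsingleton_modExt_localizedModule S (h.subsingleton_modExt i),
    fun i => (subsingleton_modExt_left_iff dualEquiv _).1
      (subsingleton_modExt_localizedModule S (h.subsingleton_modExt_dual i))⟩

theorem GDimLE.localizedModule {n : ℕ} (h : GDimLE A n (ModuleCat.of A X)) :
    GDimLE (Localization S) n (ModuleCat.of (Localization S) (LocalizedModule S X)) := by
  induction n generalizing X with
  | zero => exact IsGDimZero.localizedModule S h
  | succ n ih =>
    obtain ⟨G, f, hG, hf, hK⟩ := h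
    have ker_inj := LocalizedModule.map_injective S _ (Submodule.injective_subtype f.ker)
    have ker_eq := (localizedModule_map_exact S f.exact_subtype_ker_map).linearMap_ker_eq
    exact ⟨ModuleCat.of _ (LocalizedModule S G), LocalizedModule.map S f, hG.localizedModule S,
      LocalizedModule.map_surjective S f hf,
      (ih hK).congr ((LinearEquiv.ofInjective _ ker_inj).trans (LinearEquiv.ofEq _ _ ker_eq.symm))⟩

end Localization

section LocalDepth

variable {A : Type u} [CommRing A] {p : Ideal A} [p.IsPrime]
variable {X Y Z : Type u} [AddCommGroup X] [Module A X] [AddCommGroup Y] [Module A Y]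
  [AddCommGroup Z] [Module A Z]

theorem locDepth_congr (e : X ≃ₗ[A] Y) : locDepth A p X = locDepth A p Y :=
  edepth_congr (IsLocalizedModule.mapEquiv p.primeCompl (LocalizedModule.mkLinearMap p.primeCompl X)
    (LocalizedModule.mkLinearMap p.primeCompl Y) (Localization.AtPrime p) e)

theorem locDepth_le_locDepth_add_one {f : X →ₗ[A] Y} {g : Y →ₗ[A] Z} (hf : Function.Injective f)
    (hfg : Function.Exact f g) (hg : Function.Surjective g)
    (h : locDepth A p Z < locDepth A p Y) : locDepth A p X ≤ locDepth A p Z + 1 :=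
  edepth_le_edepth_add_one (LocalizedModule.map_injective _ f hf)
    (localizedModule_map_exact _ hfg) (LocalizedModule.map_surjective _ g hg) h

theorem IsKthSyzygy.stilde {k : ℕ} (h : IsKthSyzygy A k (ModuleCat.of A X)) : Stilde A k X :=
  fun p _ => (h.localizedModule p.primeCompl).min_le_edepth

theorem locRingDepth_le_locDepth_of_isKthSyzygy (h : ∀ k, IsKthSyzygy A k (ModuleCat.of A X)) :
    locRingDepth A p ≤ locDepth A p X :=
  edepth_self_le_of_isKthSyzygy fun k => (h k).localizedModule p.primeCompl

theorem locRingDepth_le_locDepth_of_projective [Module.Projective A X] [Module.Finite A X] :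
    locRingDepth A p ≤ locDepth A p X :=
  edepth_self_le_of_projective

theorem edepth_eq_zero_of_mem_associatedPrimes [IsNoetherianRing A] {I : Ideal A}
    (hI : I ∈ associatedPrimes A X) : edepth A I X = 0 := by
  obtain ⟨_, f, hf⟩ := isAssociatedPrime_iff_exists_injective_linearMap I X |>.1 hI
  refine nonpos_iff_eq_zero.1 (edepth_le_of_not_subsingleton (k := 0) fun h => ?_)
  have := subsingleton_modExt_zero_iff.1 h
  exact one_ne_zero (hf ((LinearMap.congr_fun (Subsingleton.elim f 0) 1).trans (map_zero f).symm))

theorem locDepth_eq_zero_of_mem_associatedPrimes [IsNoetherianRing A]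
    (hp : p ∈ associatedPrimes A X) : locDepth A p X = 0 :=
  edepth_eq_zero_of_mem_associatedPrimes
    (Module.associatedPrimes.mem_associatedPrimes_atPrime_of_mem_associatedPrimes hp)

end LocalDepth

section LinkedModule

variable {A : Type u} [CommRing A] {M P : Type u} [AddCommGroup M] [Module A M]
  [AddCommGroup P] [Module A P]

theorem rangeDualMap_eq_top_iff [Module.Projective A P] {π : P →ₗ[A] M}
    (hπ : Function.Surjective π) :
    LinearMap.range π.ker.subtype.dualMap = ⊤ ↔ Subsingleton (ModExt A M A 1) :=
  LinearMap.range_eq_top.trans (subsingleton_modExt_one_iff_surjective_dualMap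
    (Submodule.injective_subtype _) π.exact_subtype_ker_map hπ
    (subsingleton_modExt_succ_of_projective 0)).symm

theorem nonempty_rangeDualMap_equiv_of_exact {Q : Type u} [AddCommGroup Q] [Module A Q]
    {d : Q →ₗ[A] P} {π : P →ₗ[A] M} (h : Function.Exact d π) :
    Nonempty (LinearMap.range d.dualMap ≃ₗ[A] LinearMap.range π.ker.subtype.dualMap) := by
  let δ : Q →ₗ[A] π.ker := d.codRestrict _ fun x => h.apply_apply_eq_zero x
  have hδ : Function.Surjective δ := fun ⟨y, hy⟩ =>
    ((h y).1 hy).imp fun x hx => Subtype.ext hx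
  have range_eq : LinearMap.range d.dualMap =
      (LinearMap.range π.ker.subtype.dualMap).map δ.dualMap :=
    LinearMap.range_comp π.ker.subtype.dualMap δ.dualMap
  exact ⟨(LinearEquiv.ofEq _ _ range_eq).trans (Submodule.equivMapOfInjective δ.dualMap
    (LinearMap.dualMap_injective_of_surjective hδ) _).symm⟩

variable [IsNoetherianRing A] [Module.Finite A P] [Module.Projective A P]

theorem subsingleton_localizedModule_dual_quotient {π : P →ₗ[A] M} (hπ : Function.Surjective π)
    {S : Submonoid A}
    (h : Subsingleton (ModExt (Localization S) (LocalizedModule S M) (Localization S) 1)) :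
    Subsingleton
      (LocalizedModule S (Module.Dual A π.ker ⧸ LinearMap.range π.ker.subtype.dualMap)) := by
  have surj : Function.Surjective (LocalizedModule.map S π.ker.subtype.dualMap) := by
    rw [← surjective_dualMap_map_iff]
    exact (subsingleton_modExt_one_iff_surjective_dualMap
      (LocalizedModule.map_injective S _ (Submodule.injective_subtype _))
      (localizedModule_map_exact S π.exact_subtype_ker_map) (LocalizedModule.map_surjective S π hπ)
      (subsingleton_modExt_succ_of_projective 0)).1 h
  refine subsingleton_of_forall_eq 0 fun y => ?_
  obtain ⟨z, rfl⟩ := LocalizedModule.map_surjective S _ (Submodule.mkQ_surjective _) y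
  exact (localizedModule_map_exact S π.ker.subtype.dualMap.exact_map_mkQ_range z).2 (surj z)

theorem exists_prime_locDepth_le_one {π : P →ₗ[A] M} (hπ : Function.Surjective π)
    (hM : ¬ Subsingleton (ModExt A M A 1)) :
    ∃ (p : Ideal A) (_ : p.IsPrime),
      ¬ Subsingleton (ModExt (Localization.AtPrime p) (LocalizedModule p.primeCompl M)
        (Localization.AtPrime p) 1) ∧
      (1 ≤ locRingDepth A p → locDepth A p (LinearMap.range π.ker.subtype.dualMap) ≤ 1) := by
  have : Nontrivial (Module.Dual A π.ker ⧸ LinearMap.range π.ker.subtype.dualMap) :=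
    Submodule.Quotient.nontrivial_iff.2 fun h => hM ((rangeDualMap_eq_top_iff hπ).1 h)
  obtain ⟨p, hp⟩ := associatedPrimes.nonempty A
    (Module.Dual A π.ker ⧸ LinearMap.range π.ker.subtype.dualMap)
  have := hp.1
  refine ⟨p, this, fun h => ?_, fun ht => ?_⟩
  · have := subsingleton_localizedModule_dual_quotient hπ h
    exact not_isAssociatedPrime_of_subsingleton
      (Module.associatedPrimes.mem_associatedPrimes_atPrime_of_mem_associatedPrimes hp)
  have quot_depth := locDepth_eq_zero_of_mem_associatedPrimes hp
  have dual_depth : 1 ≤ locDepth A p (Module.Dual A π.ker) :=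
    (le_min Nat.cast_one.ge ht).trans ((isKthSyzygy_dual (k := 0) (by simp)).stilde p this)
  have := locDepth_le_locDepth_add_one (Submodule.injective_subtype _)
    (LinearMap.exact_subtype_mkQ (LinearMap.range π.ker.subtype.dualMap))
    (Submodule.mkQ_surjective _) (p := p)
    (quot_depth ▸ zero_lt_one.trans_le dual_depth)
  rwa [quot_depth, zero_add] at this

theorem exists_prime_locDepth_le {r : ℕ} {π : P →ₗ[A] M} (hπ : Function.Surjective π)
    (hlt : ∀ i < r, Subsingleton (ModExt A M A (i + 1)))
    (hr : ¬ Subsingleton (ModExt A M A (r + 1))) :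
    ∃ (p : Ideal A) (_ : p.IsPrime),
      ¬ Subsingleton (ModExt (Localization.AtPrime p) (LocalizedModule p.primeCompl M)
        (Localization.AtPrime p) (r + 1)) ∧
      ((r + 1 : ℕ) ≤ locRingDepth A p →
        locDepth A p (LinearMap.range π.ker.subtype.dualMap) ≤ (r + 1 : ℕ)) := by
  induction r generalizing M P with
  | zero => simpa only [Nat.cast_one, zero_add] using exists_prime_locDepth_le_one hπ hr
  | succ r ih =>
    obtain ⟨n, q, hq⟩ := Module.Finite.exists_fin' A π.ker
    obtain ⟨p, hp, ext_ne, depth_le⟩ := ih hq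
      (fun i hi => subsingleton_modExt_ker hπ (hlt (i + 1) (Nat.succ_lt_succ hi)))
      fun h => hr (subsingleton_ext_of_X₃ (LinearMap.shortExact_shortComplexKer hπ)
        (subsingleton_modExt_succ_of_projective _) h)
    refine ⟨p, hp, fun h => ext_ne ?_, fun ht => ?_⟩
    · exact subsingleton_ext_of_X₁ (moduleCat_shortExact
        (LocalizedModule.map_injective _ _ (Submodule.injective_subtype _))
        (localizedModule_map_exact _ π.exact_subtype_ker_map)
        (LocalizedModule.map_surjective _ π hπ)) (subsingleton_modExt_succ_of_projective _) h
    have range_eq_top := (rangeDualMap_eq_top_iff hπ).2 (hlt 0 r.succ_pos)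
    have lt_ring : ((r + 1 : ℕ) : ℕ∞) < locRingDepth A p :=
      (Nat.cast_lt.2 (Nat.lt_succ_self _)).trans_le ht
    have range_le := depth_le lt_ring.le
    calc locDepth A p (LinearMap.range π.ker.subtype.dualMap)
        = locDepth A p (Module.Dual A π.ker) := locDepth_congr (LinearEquiv.ofTop _ range_eq_top)
      _ ≤ locDepth A p (LinearMap.range q.ker.subtype.dualMap) + 1 :=
          locDepth_le_locDepth_add_one (LinearMap.dualMap_injective_of_surjective hq)
            (g := q.ker.subtype.dualMap.rangeRestrict) (fun φ => Subtype.ext_iff.trans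
              (dualMap_exact q.exact_subtype_ker_map hq φ))
            (LinearMap.surjective_rangeRestrict _)
            ((range_le.trans_lt lt_ring).trans_le locRingDepth_le_locDepth_of_projective)
      _ ≤ (r + 1 + 1 : ℕ) := by push_cast at range_le ⊢; gcongr

theorem locRingDepth_lt_locDepth_add_locDepth {p : Ideal A} [p.IsPrime] {π : P →ₗ[A] M}
    (hπ : Function.Surjective π) (hM : IsGDimZero A M) (hp : 0 < locRingDepth A p) :
    locRingDepth A p <
      locDepth A p M + locDepth A p (LinearMap.range π.ker.subtype.dualMap) := by
  have range_eq_top := (rangeDualMap_eq_top_iff hπ).2 (hM.subsingleton_modExt 0)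
  have range_syzygy (k : ℕ) :
      IsKthSyzygy A k (ModuleCat.of A (LinearMap.range π.ker.subtype.dualMap)) := by
    cases k with
    | zero => trivial
    | succ k =>
      exact (isKthSyzygy_dual fun i _ => subsingleton_modExt_ker hπ
        (hM.subsingleton_modExt (i + 1))).congr (LinearEquiv.ofTop _ range_eq_top).symm
  calc locRingDepth A p < locRingDepth A p + locRingDepth A p :=
        ENat.lt_add_left rdepth_lt_top.ne hp
    _ ≤ _ := add_le_add (locRingDepth_le_locDepth_of_isKthSyzygy hM.isKthSyzygy)
        (locRingDepth_le_locDepth_of_isKthSyzygy range_syzygy)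

theorem exists_prime_locDepth_add_locDepth_le {n : ℕ} {π : P →ₗ[A] M}
    (hπ : Function.Surjective π) (hn : GDimLE A n (ModuleCat.of A M)) (hM : ¬ IsGDimZero A M) :
    ∃ (p : Ideal A) (_ : p.IsPrime), 0 < locRingDepth A p ∧
      locDepth A p M + locDepth A p (LinearMap.range π.ker.subtype.dualMap) ≤
        locRingDepth A p := by
  classical
  have exists_ext_ne : ∃ r, ¬ Subsingleton (ModExt A M A (r + 1)) := by
    by_contra! h
    exact hM (hn.isGDimZero h)
  obtain ⟨p, hp, ext_ne, range_le⟩ := exists_prime_locDepth_le hπ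
    (fun i hi => not_not.1 (Nat.find_min exists_ext_ne hi)) (Nat.find_spec exists_ext_ne)
  set r := Nat.find exists_ext_ne
  have depth_add_le : locDepth A p M + (r + 1 : ℕ) ≤ locRingDepth A p :=
    (hn.localizedModule p.primeCompl).edepth_add_le_rdepth ext_ne
  have le_ring : ((r + 1 : ℕ) : ℕ∞) ≤ locRingDepth A p := le_add_self.trans depth_add_le
  exact ⟨p, hp, (Nat.cast_pos.2 r.succ_pos).trans_le le_ring,
    (add_le_add_right (range_le le_ring) _).trans depth_add_le⟩

theorem stmt3_general {Q : Type u} [AddCommGroup Q] [Module A Q] {d : Q →ₗ[A] P} {ε : P →ₗ[A] M}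
    (hdε : Function.Exact d ε) (hε : Function.Surjective ε) (hfin : GDim A M < ⊤) :
    GDim A M = 0 ↔ ∀ (p : Ideal A) (h : p.IsPrime), haveI := h;
      0 < locRingDepth A p →
        locRingDepth A p < locDepth A p M + locDepth A p (LinearMap.range d.dualMap) := by
  obtain ⟨e⟩ := nonempty_rangeDualMap_equiv_of_exact hdε
  have depth_eq (p : Ideal A) [p.IsPrime] : locDepth A p (LinearMap.range d.dualMap) =
      locDepth A p (LinearMap.range ε.ker.subtype.dualMap) := locDepth_congr e
  simp only [gDim_eq_zero_iff, depth_eq]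
  constructor
  · intro hM p _ hp
    exact locRingDepth_lt_locDepth_add_locDepth hε hM hp
  · intro hlt
    by_contra hM
    obtain ⟨n, hn⟩ := exists_gDimLE_of_gDim_lt_top hfin
    obtain ⟨p, hp, ring_pos, hle⟩ := exists_prime_locDepth_add_locDepth_le hε hn hM
    exact (hlt p hp ring_pos).not_ge hle

end LinkedModule

theorem stmt3 (M : Type u) [AddCommGroup M] [Module R M] [Module.Finite R M]
    (F : MinRes R M) (hHL : IsHorizontallyLinked R M) (hfin : GDim R M < ⊤) :
    GDim R M = 0 ↔ ∀ (p : Ideal R) (h : p.IsPrime), haveI := h;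
      0 < locRingDepth R p →
        locRingDepth R p < locDepth R p M + locDepth R p F.lambdaMod := by
  have := F.projective 0
  have := F.finite 0
  exact stmt3_general (LinearMap.exact_iff.2 F.exact0.symm) F.surj hfin

end Statements
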